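/- Fix integers r ≥ 3 and n ≥ 1, let G be a GOTE(r,n) tensor, w ∈ ℝⁿ a unit vector and M = G·w^{⊗(r−2)} the pure contraction; set α = √((r−2)(r−3)/(r−1)), β = √((r−2)/(r−1)), θ = √(1/(r−1)). On an auxiliary probability space let U be a standard Gaussian random variable, V = (V₁,…,V_n) a vector of n independent standard Gaussians, and Z a GOE(n) matrix (a random real symmetric n×n matrix whose entries (Z_{ij})_{i ≤ j} are independent centered Gaussians with Var(Z_{ij}) = 1 for i < j and Var(Z_{ii}) = 2, and Z_{ji} = Z_{ij}), with U, V, Z mutually independent. Define X = αU·wwᵀ + β(Vwᵀ + wVᵀ) + θZ. Then M and X are equal in distribution: the law of the random symmetric matrix M equals the law of X. -/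

import Mathlib

open MeasureTheory ProbabilityTheory Filter

noncomputable section

/-- The size-`r` multiset of entries of a tuple `a : Fin r → Fin n`. -/
def tupleSym {n r : ℕ} (a : Fin r → Fin n) : Sym (Fin n) r :=
  ⟨(List.ofFn a : Multiset (Fin n)), by simp⟩

/-- `#Perm(a)`: the number of tuples with the same multiset of entries as `a`. -/
def permCount {n r : ℕ} (a : Fin r → Fin n) : ℕ :=
  (Finset.univ.filter (fun b : Fin r → Fin n => tupleSym b = tupleSym a)).card

/-- The sample space for a GOTE(r,n) tensor: one standard Gaussian coordinate for each
size-`r` multiset of indices. -/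
abbrev GoteSpace (r n : ℕ) : Type := Sym (Fin n) r → ℝ

/-- The law of the coordinates of a GOTE(r,n) tensor: a product of standard Gaussians. -/
def goteMeasure (r n : ℕ) : Measure (GoteSpace r n) :=
  Measure.pi fun _ => gaussianReal 0 1

instance (r n : ℕ) : IsProbabilityMeasure (goteMeasure r n) := by
  unfold goteMeasure; infer_instance

/-- The entries of the GOTE(r,n) tensor built from the Gaussian coordinates `ω`. -/
def gote {r n : ℕ} (ω : GoteSpace r n) (a : Fin r → Fin n) : ℝ :=
  Real.sqrt ((r : ℝ) / (permCount a : ℝ)) * ω (tupleSym a)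

/-- The index tuple `(i, j, f 0, …, f (r-3))`. -/
def glue {n r : ℕ} (i j : Fin n) (f : Fin (r - 2) → Fin n) : Fin r → Fin n :=
  fun t =>
    if h0 : (t : ℕ) = 0 then i
    else if h1 : (t : ℕ) = 1 then j
    else f ⟨(t : ℕ) - 2, by have := t.isLt; omega⟩

/-- The pure contraction `G ⬝ w^{⊗(r-2)}`, an `n × n` random symmetric matrix. -/
def pureContraction {r n : ℕ} (ω : GoteSpace r n) (w : Fin n → ℝ) :
    Matrix (Fin n) (Fin n) ℝ :=
  fun i j => ∑ f : Fin (r - 2) → Fin n, gote ω (glue i j f) * ∏ k, w (f k)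

open Classical in
/-- The eigenvalues (in some order) of a matrix, defined for symmetric matrices via the
spectral theorem and as `0` otherwise. -/
def eigsOf {n : ℕ} (A : Matrix (Fin n) (Fin n) ℝ) : Fin n → ℝ :=
  if h : A.IsHermitian then h.eigenvalues else 0

/-- The largest eigenvalue `λ₁` of a symmetric matrix. -/
def lambdaMax {n : ℕ} (A : Matrix (Fin n) (Fin n) ℝ) : ℝ := ⨆ i, eigsOf A i

/-- The smallest eigenvalue `λₙ` of a symmetric matrix. -/
def lambdaMin {n : ℕ} (A : Matrix (Fin n) (Fin n) ℝ) : ℝ := ⨅ i, eigsOf A i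

/-- The semicircle distribution with variance `σ²` (parameter `s = σ²`). -/
def semicircle (s : ℝ) : Measure ℝ :=
  volume.withDensity fun x => ENNReal.ofReal (Real.sqrt (4 * s - x ^ 2) / (2 * Real.pi * s))

end

/-- Index set for the upper-triangular entries of an `n × n` matrix. -/
abbrev UpperIdx (n : ℕ) : Type := {p : Fin n × Fin n // p.1 ≤ p.2}

/-- The law of the upper-triangular entries of a GOE(n) matrix: independent centered
Gaussians with variance `2` on the diagonal and `1` off the diagonal. -/
noncomputable def goeMeasure (n : ℕ) : Measure (UpperIdx n → ℝ) :=
  Measure.pi fun p => gaussianReal 0 (if p.1.1 = p.1.2 then 2 else 1)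

/-- The GOE(n) matrix built from its upper-triangular entries. -/
noncomputable def goeMatrix {n : ℕ} (z : UpperIdx n → ℝ) : Matrix (Fin n) (Fin n) ℝ :=
  fun i j => if h : i ≤ j then z ⟨(i, j), h⟩ else z ⟨(j, i), (not_le.mp h).le⟩

/-- Averaged test tensors: `A` placed in the slots `p, q` and `w` in the other ones. -/
noncomputable def psiF {n r : ℕ} (w : Fin n → ℝ) (p q : Fin r) (x y : Fin n) (k : Fin r)
    (i : Fin n) : ℝ :=
  if k = p then (if i = x then 1 else 0) else if k = q then (if i = y then 1 else 0) else w i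

/-- The tensor with `A` in the slots `p, q` and `w` in the other ones. -/
noncomputable def tenT {n r : ℕ} (A : Fin n → Fin n → ℝ) (w : Fin n → ℝ) (p q : Fin r)
    (a : Fin r → Fin n) : ℝ :=
  ∑ x, ∑ y, A x y * ∏ k, psiF w p q x y k (a k)

lemma tenT_comp {n r : ℕ} (A : Fin n → Fin n → ℝ) (w : Fin n → ℝ) (p q : Fin r)
    (a : Fin r → Fin n) (σ : Equiv.Perm (Fin r)) :
    tenT A w p q (a ∘ σ) = tenT A w (σ p) (σ q) a := by
  unfold tenT
  refine Finset.sum_congr rfl fun x _ => Finset.sum_congr rfl fun y _ => ?_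
  congr 1
  refine Fintype.prod_equiv σ _ _ fun k => ?_
  simp [psiF]

lemma tupleSym_eq_iff {n r : ℕ} (a b : Fin r → Fin n) :
    tupleSym a = tupleSym b ↔ ∃ σ : Equiv.Perm (Fin r), b ∘ σ = a := by
  constructor
  · intro h
    have h1 : (List.ofFn a).Perm (List.ofFn b) := by
      have := congrArg Subtype.val h
      exact Multiset.coe_eq_coe.mp this
    have h2 : ∀ z, Fintype.card {k // a k = z} = Fintype.card {k // b k = z} := by
      intro z
      have h3 := congrArg (Multiset.count z) (Multiset.coe_eq_coe.mpr h1)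
      rw [← Fin.univ_val_map, ← Fin.univ_val_map, Multiset.count_map, Multiset.count_map] at h3
      simp only [Fintype.card_subtype, Finset.card_def, Finset.filter_val]
      simpa [eq_comm] using h3
    let e : ∀ z, {k // a k = z} ≃ {k // b k = z} := fun z => Fintype.equivOfCardEq (h2 z)
    refine ⟨((Equiv.sigmaFiberEquiv a).symm.trans (Equiv.sigmaCongrRight e)).trans
      (Equiv.sigmaFiberEquiv b), ?_⟩
    funext k
    exact (e (a k) ⟨k, rfl⟩).2
  · rintro ⟨σ, rfl⟩
    apply Subtype.ext
    exact Multiset.coe_eq_coe.mpr (Equiv.Perm.ofFn_comp_perm σ b)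

/-- The sum of `tenT` over all pairs of slots. -/
noncomputable def tenS {n r : ℕ} (A : Fin n → Fin n → ℝ) (w : Fin n → ℝ)
    (a : Fin r → Fin n) : ℝ :=
  ∑ p, ∑ q, if p = q then 0 else tenT A w p q a

lemma tenS_comp {n r : ℕ} (A : Fin n → Fin n → ℝ) (w : Fin n → ℝ)
    (a : Fin r → Fin n) (σ : Equiv.Perm (Fin r)) :
    tenS A w (a ∘ σ) = tenS A w a := by
  unfold tenS
  refine Fintype.sum_equiv σ _ _ fun p => Fintype.sum_equiv σ _ _ fun q => ?_
  simp [tenT_comp]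

lemma exists_perm_two {r : ℕ} (a b p q : Fin r) (hab : a ≠ b) (hpq : p ≠ q) :
    ∃ σ : Equiv.Perm (Fin r), σ a = p ∧ σ b = q := by
  refine ⟨Equiv.swap (Equiv.swap a p b) q * Equiv.swap a p, ?_, ?_⟩
  · simp only [Equiv.Perm.mul_apply, Equiv.swap_apply_left]
    apply Equiv.swap_apply_of_ne_of_ne _ hpq
    intro h
    have : Equiv.swap a p a = Equiv.swap a p b := by rw [Equiv.swap_apply_left]; exact h
    exact hab ((Equiv.swap a p).injective this)
  · simp

lemma tupleSym_comp {n r : ℕ} (a : Fin r → Fin n) (σ : Equiv.Perm (Fin r)) :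
    tupleSym (a ∘ σ) = tupleSym a := (tupleSym_eq_iff _ _).2 ⟨σ, rfl⟩

lemma sum_tenT_class {n r : ℕ} (A : Fin n → Fin n → ℝ) (w : Fin n → ℝ) (p q p' q' : Fin r)
    (h : p ≠ q) (h' : p' ≠ q') (m : Sym (Fin n) r) :
    ∑ a ∈ Finset.univ.filter (fun a : Fin r → Fin n => tupleSym a = m), tenT A w p q a =
    ∑ a ∈ Finset.univ.filter (fun a : Fin r → Fin n => tupleSym a = m), tenT A w p' q' a := by
  obtain ⟨σ, rfl, rfl⟩ := exists_perm_two p q p' q' h h'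
  rw [Finset.sum_filter, Finset.sum_filter]
  refine Fintype.sum_equiv (Equiv.arrowCongr σ (Equiv.refl _)) _ _ fun a => ?_
  have : (Equiv.arrowCongr σ (Equiv.refl _)) a = a ∘ (σ⁻¹ : Equiv.Perm (Fin r)) := rfl
  rw [this, tupleSym_comp, tenT_comp]
  simp

lemma sum_tenS_class {n s : ℕ} (A : Fin n → Fin n → ℝ) (w : Fin n → ℝ)
    (m : Sym (Fin n) (s + 2)) :
    ∑ a ∈ Finset.univ.filter (fun a : Fin (s + 2) → Fin n => tupleSym a = m), tenS A w a =
    ((s : ℝ) + 2) * (s + 1) *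
    ∑ a ∈ Finset.univ.filter (fun a : Fin (s + 2) → Fin n => tupleSym a = m),
      tenT A w 0 1 a := by
  unfold tenS
  rw [Finset.sum_comm]
  have : ∀ p : Fin (s + 2), ∑ a ∈ Finset.univ.filter
      (fun a : Fin (s + 2) → Fin n => tupleSym a = m),
      ∑ q, (if p = q then 0 else tenT A w p q a) = (s + 1) * ∑ a ∈ Finset.univ.filter
      (fun a : Fin (s + 2) → Fin n => tupleSym a = m), tenT A w 0 1 a := by
    intro p
    rw [Finset.sum_comm]
    have h : ∀ q : Fin (s + 2), ∑ a ∈ Finset.univ.filter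
      (fun a : Fin (s + 2) → Fin n => tupleSym a = m), (if p = q then 0 else tenT A w p q a)
      = (1 - if p = q then 1 else 0) * ∑ a ∈ Finset.univ.filter
      (fun a : Fin (s + 2) → Fin n => tupleSym a = m), tenT A w 0 1 a := by
      intro q
      split_ifs with h
      · simp
      · rw [sum_tenT_class A w p q 0 1 h (by simp)]; ring
    rw [Finset.sum_congr rfl fun q _ => h q, ← Finset.sum_mul]
    congr 1
    simp
    ring
  rw [Finset.sum_congr rfl fun p _ => this p]
  simp
  ring

lemma sum_psi {n r : ℕ} (w : Fin n → ℝ) (p q p' q' : Fin r) (A : Fin n → Fin n → ℝ) :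
    ∑ a : Fin r → Fin n, tenT A w p q a * tenT A w p' q' a =
    ∑ x, ∑ y, ∑ x', ∑ y', A x y * A x' y' *
      ∏ k, ∑ i, psiF w p q x y k i * psiF w p' q' x' y' k i := by
  have : ∀ x y x' y', ∏ k, ∑ i, psiF w p q x y k i * psiF w p' q' x' y' k i =
      ∑ a : Fin r → Fin n, (∏ k, psiF w p q x y k (a k)) * ∏ k, psiF w p' q' x' y' k (a k) := by
    intro x y x' y'
    rw [Finset.prod_univ_sum]
    simp [Finset.prod_mul_distrib]
  simp_rw [this, Finset.mul_sum]
  have h : ∀ a : Fin r → Fin n, tenT A w p q a * tenT A w p' q' a =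
      ∑ x, ∑ y, ∑ x', ∑ y', A x y * A x' y' *
        ((∏ k, psiF w p q x y k (a k)) * ∏ k, psiF w p' q' x' y' k (a k)) := by
    intro a
    unfold tenT
    rw [Finset.sum_mul]
    refine Finset.sum_congr rfl fun x _ => ?_
    rw [Finset.sum_mul]
    refine Finset.sum_congr rfl fun y _ => ?_
    rw [Finset.mul_sum]
    refine Finset.sum_congr rfl fun x' _ => ?_
    rw [Finset.mul_sum]
    refine Finset.sum_congr rfl fun y' _ => ?_
    ring
  rw [Finset.sum_congr rfl fun a _ => h a]
  rw [Finset.sum_comm]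
  refine Finset.sum_congr rfl fun x _ => ?_
  rw [Finset.sum_comm]
  refine Finset.sum_congr rfl fun y _ => ?_
  rw [Finset.sum_comm]
  refine Finset.sum_congr rfl fun x' _ => ?_
  rw [Finset.sum_comm]

/-- Coefficient of `ω m` in `⟨A, M⟩`. -/
noncomputable def coefC {n s : ℕ} (A : Fin n → Fin n → ℝ) (w : Fin n → ℝ)
    (m : Sym (Fin n) (s + 2)) : ℝ :=
  ∑ a ∈ Finset.univ.filter (fun a : Fin (s + 2) → Fin n => tupleSym a = m),
    Real.sqrt (((s + 2 : ℕ) : ℝ) / (permCount a : ℝ)) * tenT A w 0 1 a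

lemma coefC_sq {n s : ℕ} (A : Fin n → Fin n → ℝ) (w : Fin n → ℝ)
    (m : Sym (Fin n) (s + 2)) :
    coefC A w m ^ 2 = ((s : ℝ) + 1)⁻¹ *
      ∑ a ∈ Finset.univ.filter (fun a : Fin (s + 2) → Fin n => tupleSym a = m),
        tenT A w 0 1 a * tenS A w a := by
  set F := Finset.univ.filter (fun a : Fin (s + 2) → Fin n => tupleSym a = m) with hF
  set S := ∑ a ∈ F, tenT A w 0 1 a with hS
  have hpc : ∀ a ∈ F, permCount a = F.card := by
    intro a ha
    have : tupleSym a = m := by simpa [hF] using ha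
    simp [permCount, this, hF]
  have h1 : coefC A w m = Real.sqrt (((s + 2 : ℕ) : ℝ) / (F.card : ℝ)) * S := by
    unfold coefC
    rw [hS, Finset.mul_sum]
    exact Finset.sum_congr rfl fun a ha => by rw [hpc a ha]
  have h2 : ∀ a ∈ F, (F.card : ℝ) * tenS A w a = ((s : ℝ) + 2) * (s + 1) * S := by
    intro a ha
    rw [← sum_tenS_class A w m, ← nsmul_eq_mul, ← Finset.sum_const]
    refine Finset.sum_congr rfl fun b hb => ?_
    have ha' : tupleSym a = m := by simpa [hF] using ha
    have hb' : tupleSym b = m := by simpa using hb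
    obtain ⟨σ, rfl⟩ := (tupleSym_eq_iff a b).1 (by rw [ha', hb'])
    exact tenS_comp A w b σ
  rw [h1, mul_pow, Real.sq_sqrt (by positivity), sq, hS, Finset.sum_mul, Finset.mul_sum,
    Finset.mul_sum, ← hS]
  refine Finset.sum_congr rfl fun a ha => ?_
  have hc : (F.card : ℝ) ≠ 0 := by
    have := Finset.card_pos.2 ⟨a, ha⟩
    positivity
  have h3 : tenS A w a = ((s : ℝ) + 2) * (s + 1) * S / F.card := by
    rw [eq_div_iff hc, ← h2 a ha]; ring
  rw [h3]
  have : (s : ℝ) + 1 ≠ 0 := by positivity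
  push_cast
  field_simp

lemma sum_coefC_sq {n s : ℕ} (A : Fin n → Fin n → ℝ) (w : Fin n → ℝ) :
    ∑ m : Sym (Fin n) (s + 2), coefC A w m ^ 2 = ((s : ℝ) + 1)⁻¹ *
      ∑ p : Fin (s + 2), ∑ q : Fin (s + 2), if p = q then 0 else
        ∑ a : Fin (s + 2) → Fin n, tenT A w 0 1 a * tenT A w p q a := by
  simp_rw [coefC_sq, ← Finset.mul_sum]
  congr 1
  rw [Finset.sum_fiberwise]
  unfold tenS
  simp_rw [Finset.mul_sum]
  rw [Finset.sum_comm]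
  refine Finset.sum_congr rfl fun p _ => ?_
  rw [Finset.sum_comm]
  refine Finset.sum_congr rfl fun q _ => ?_
  split_ifs <;> simp

lemma sum_if_ne (s : ℕ) (C : ℝ) (p : Fin s) :
    ∑ q : Fin s, (if p = q then 0 else C) = ((s : ℝ) - 1) * C := by
  have : ∀ q : Fin s, (if p = q then 0 else C) = C - if p = q then C else 0 := by
    intro q; split_ifs <;> simp
  simp_rw [this, Finset.sum_sub_distrib]
  simp
  ring

lemma prod_two {s : ℕ} (p q : Fin s) (h : p ≠ q) (u v : ℝ) :
    ∏ k : Fin s, (if k = p then u else if k = q then v else 1) = u * v := by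
  have : ∀ k : Fin s, (if k = p then u else if k = q then v else 1) =
      (if k = p then u else 1) * (if k = q then v else 1) := by
    intro k
    by_cases h1 : k = p
    · subst h1; simp [h]
    · simp [h1]
  simp_rw [this, Finset.prod_mul_distrib]
  simp

section pairs
variable {n s : ℕ} (A : Fin n → Fin n → ℝ) (w : Fin n → ℝ) (hw : ∑ i, w i * w i = 1)

lemma inner_psi {r : ℕ} (hw : ∑ i, w i * w i = 1) (p q p' q' : Fin r) (x y x' y' : Fin n)
    (k : Fin r) :
    ∑ i, psiF w p q x y k i * psiF w p' q' x' y' k i =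
      if k = p then (if k = p' then (if x = x' then 1 else 0)
          else if k = q' then (if x = y' then 1 else 0) else w x)
      else if k = q then (if k = p' then (if y = x' then 1 else 0)
          else if k = q' then (if y = y' then 1 else 0) else w y)
      else (if k = p' then w x' else if k = q' then w y' else 1) := by
  unfold psiF
  split_ifs <;> simp_all <;> grind

lemma fin_one_succ : (1 : Fin (s + 2)) = (0 : Fin (s + 1)).succ := rfl

lemma q01 (hw : ∑ i, w i * w i = 1) :
    ∑ a : Fin (s + 2) → Fin n, tenT A w 0 1 a * tenT A w 0 1 a =
      ∑ x, ∑ y, A x y * A x y := by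
  rw [sum_psi]
  simp_rw [inner_psi w hw, Fin.prod_univ_succ, fin_one_succ]
  simp only [Fin.succ_ne_zero, Fin.succ_inj, if_true, if_false, Finset.prod_const_one, mul_one]
  refine Finset.sum_congr rfl fun x _ => Finset.sum_congr rfl fun y _ => ?_
  simp [mul_ite, ite_mul]

lemma q10 (hw : ∑ i, w i * w i = 1) :
    ∑ a : Fin (s + 2) → Fin n, tenT A w 0 1 a * tenT A w 1 0 a =
      ∑ x, ∑ y, A x y * A y x := by
  rw [sum_psi]
  simp_rw [inner_psi w hw, Fin.prod_univ_succ, fin_one_succ]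
  simp only [Fin.succ_ne_zero, (Fin.succ_ne_zero _).symm, Fin.succ_inj, if_true, if_false,
    Finset.prod_const_one, mul_one]
  refine Finset.sum_congr rfl fun x _ => Finset.sum_congr rfl fun y _ => ?_
  simp [mul_ite, ite_mul]

/-- `A w`. -/
noncomputable def rowV (x : Fin n) : ℝ := ∑ y, A x y * w y

/-- `Aᵀ w`. -/
noncomputable def colV (y : Fin n) : ℝ := ∑ x, A x y * w x

lemma q0q (hw : ∑ i, w i * w i = 1) (q : Fin s) :
    ∑ a : Fin (s + 2) → Fin n, tenT A w 0 1 a * tenT A w 0 q.succ.succ a =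
      ∑ x, rowV A w x * rowV A w x := by
  rw [sum_psi]
  simp_rw [inner_psi w hw, Fin.prod_univ_succ, fin_one_succ]
  simp only [Fin.succ_ne_zero, (Fin.succ_ne_zero _).symm, Fin.succ_inj, if_true, if_false,
    Finset.prod_const_one, mul_one, Finset.prod_ite_eq', Finset.mem_univ]
  refine Finset.sum_congr rfl fun x _ => ?_
  simp only [rowV, mul_ite, ite_mul, Finset.sum_mul_sum]
  refine Finset.sum_congr rfl fun y _ => ?_
  rw [Finset.sum_comm]
  refine Finset.sum_congr rfl fun y' _ => ?_
  simp
  ring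

lemma qp0 (hw : ∑ i, w i * w i = 1) (p : Fin s) :
    ∑ a : Fin (s + 2) → Fin n, tenT A w 0 1 a * tenT A w p.succ.succ 0 a =
      ∑ x, rowV A w x * colV A w x := by
  rw [sum_psi]
  simp_rw [inner_psi w hw, Fin.prod_univ_succ, fin_one_succ]
  simp only [Fin.succ_ne_zero, (Fin.succ_ne_zero _).symm, Fin.succ_inj, if_true, if_false,
    Finset.prod_const_one, mul_one, Finset.prod_ite_eq', Finset.mem_univ]
  refine Finset.sum_congr rfl fun x _ => ?_
  simp only [rowV, colV, mul_ite, ite_mul, Finset.sum_mul_sum]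
  refine Finset.sum_congr rfl fun y _ => ?_
  refine Finset.sum_congr rfl fun y' _ => ?_
  simp
  ring

lemma q1q (hw : ∑ i, w i * w i = 1) (q : Fin s) :
    ∑ a : Fin (s + 2) → Fin n, tenT A w 0 1 a * tenT A w 1 q.succ.succ a =
      ∑ x, rowV A w x * colV A w x := by
  rw [sum_psi]
  simp_rw [inner_psi w hw, Fin.prod_univ_succ, fin_one_succ]
  simp only [Fin.succ_ne_zero, (Fin.succ_ne_zero _).symm, Fin.succ_inj, if_true, if_false,
    Finset.prod_const_one, mul_one, Finset.prod_ite_eq', Finset.mem_univ]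
  rw [Finset.sum_comm]
  refine Finset.sum_congr rfl fun x _ => ?_
  rw [mul_comm]
  simp only [rowV, colV, mul_ite, ite_mul, Finset.sum_mul_sum]
  refine Finset.sum_congr rfl fun y _ => ?_
  rw [Finset.sum_comm]
  refine Finset.sum_congr rfl fun y' _ => ?_
  simp
  ring

lemma qp1 (hw : ∑ i, w i * w i = 1) (p : Fin s) :
    ∑ a : Fin (s + 2) → Fin n, tenT A w 0 1 a * tenT A w p.succ.succ 1 a =
      ∑ x, colV A w x * colV A w x := by
  rw [sum_psi]
  simp_rw [inner_psi w hw, Fin.prod_univ_succ, fin_one_succ]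
  simp only [Fin.succ_ne_zero, (Fin.succ_ne_zero _).symm, Fin.succ_inj, if_true, if_false,
    Finset.prod_const_one, mul_one, Finset.prod_ite_eq', Finset.mem_univ]
  rw [Finset.sum_comm]
  refine Finset.sum_congr rfl fun x _ => ?_
  simp only [colV, mul_ite, ite_mul, Finset.sum_mul_sum]
  refine Finset.sum_congr rfl fun y _ => ?_
  refine Finset.sum_congr rfl fun y' _ => ?_
  simp
  ring

lemma qpq (hw : ∑ i, w i * w i = 1) (p q : Fin s) (h : p ≠ q) :
    ∑ a : Fin (s + 2) → Fin n, tenT A w 0 1 a * tenT A w p.succ.succ q.succ.succ a =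
      (∑ x, ∑ y, A x y * w x * w y) ^ 2 := by
  rw [sum_psi]
  simp_rw [inner_psi w hw, Fin.prod_univ_succ, fin_one_succ]
  simp only [Fin.succ_ne_zero, (Fin.succ_ne_zero _).symm, Fin.succ_inj, if_true, if_false,
    prod_two p q h]
  rw [sq, Finset.sum_mul]
  refine Finset.sum_congr rfl fun x _ => ?_
  rw [Finset.sum_mul]
  refine Finset.sum_congr rfl fun y _ => ?_
  rw [Finset.mul_sum]
  refine Finset.sum_congr rfl fun x' _ => ?_
  rw [Finset.mul_sum]
  refine Finset.sum_congr rfl fun y' _ => ?_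
  ring

lemma var_lhs (hw : ∑ i, w i * w i = 1) :
    ∑ m : Sym (Fin n) (s + 2), coefC A w m ^ 2 = ((s : ℝ) + 1)⁻¹ *
      ((∑ x, ∑ y, A x y * A x y) + (∑ x, ∑ y, A x y * A y x)
        + s * (∑ x, (rowV A w x + colV A w x) ^ 2)
        + s * (s - 1) * (∑ x, ∑ y, A x y * w x * w y) ^ 2) := by
  rw [sum_coefC_sq]
  congr 1
  have h : ∀ p q : Fin s, (if p = q then 0 else
      ∑ a : Fin (s + 2) → Fin n, tenT A w 0 1 a * tenT A w p.succ.succ q.succ.succ a) =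
      if p = q then 0 else (∑ x, ∑ y, A x y * w x * w y) ^ 2 := by
    intro p q
    split_ifs with h
    · rfl
    · exact qpq A w hw p q h
  have h1 : (Fin.succ (0 : Fin (s + 1))) = 1 := rfl
  have e1 : ((0 : Fin (s + 2)) = 1) = False := by simp
  have e2 : ((1 : Fin (s + 2)) = 0) = False := by simp
  have e3 : ∀ p : Fin s, (p.succ.succ = 1) = False := by
    intro p; rw [← h1, Fin.succ_inj]; simp [Fin.succ_ne_zero]
  have e4 : ∀ p : Fin s, (1 = p.succ.succ) = False := by
    intro p; rw [← h1, Fin.succ_inj]; simp [(Fin.succ_ne_zero _).symm]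
  simp only [Fin.sum_univ_succ (n := s + 1), Fin.sum_univ_succ (n := s), h1, e1, e2, e3, e4,
    Fin.succ_ne_zero, (Fin.succ_ne_zero _).symm, Fin.succ_inj, if_true, if_false, h,
    q01 A w hw, q10 A w hw, q0q A w hw, qp0 A w hw, q1q A w hw, qp1 A w hw, sum_if_ne]
  simp only [Finset.sum_const, Finset.sum_add_distrib, Finset.card_univ, Fintype.card_fin,
    nsmul_eq_mul, add_sq]
  simp only [Finset.mul_sum, Finset.sum_add_distrib, mul_add, ← Finset.sum_mul, sq]
  have : ∑ x, (s : ℝ) * (2 * rowV A w x * colV A w x) =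
      2 * ∑ x, (s : ℝ) * (rowV A w x * colV A w x) := by
    rw [Finset.mul_sum]; exact Finset.sum_congr rfl fun x _ => by ring
  rw [this]
  ring_nf
end pairs

lemma integral_exp_pi {ι : Type*} [Fintype ι] (v : ι → NNReal) (c : ι → ℝ) :
    ∫ x : ι → ℝ, Complex.exp (((∑ i, c i * x i : ℝ) : ℂ) * Complex.I)
      ∂(Measure.pi fun i => gaussianReal 0 (v i)) =
    Complex.exp (-((∑ i, c i ^ 2 * v i : ℝ) : ℂ) / 2) := by
  have h : ∀ x : ι → ℝ, Complex.exp (((∑ i, c i * x i : ℝ) : ℂ) * Complex.I) =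
      ∏ i, Complex.exp ((c i : ℂ) * (x i : ℂ) * Complex.I) := by
    intro x
    rw [← Complex.exp_sum, ← Finset.sum_mul]
    push_cast
    rfl
  simp_rw [h]
  rw [integral_fintype_prod_eq_prod
    (f := fun i (y : ℝ) => Complex.exp ((c i : ℂ) * (y : ℂ) * Complex.I))]
  have h2 : ∀ i, ∫ y : ℝ, Complex.exp ((c i : ℂ) * (y : ℂ) * Complex.I)
      ∂(gaussianReal 0 (v i)) = Complex.exp (-((c i ^ 2 * v i : ℝ) : ℂ) / 2) := by
    intro i
    rw [← charFun_apply_real, charFun_gaussianReal]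
    congr 1
    push_cast
    ring
  simp_rw [h2]
  rw [← Complex.exp_sum, ← Finset.sum_div, Finset.sum_neg_distrib]
  push_cast
  rfl

lemma integral_exp_one (c : ℝ) :
    ∫ x : ℝ, Complex.exp (((c * x : ℝ) : ℂ) * Complex.I) ∂(gaussianReal 0 1) =
    Complex.exp (-((c ^ 2 : ℝ) : ℂ) / 2) := by
  push_cast
  rw [← charFun_apply_real, charFun_gaussianReal]
  congr 1
  push_cast
  ring

lemma glue_eq {n s : ℕ} (i j : Fin n) (f : Fin s → Fin n) :
    (glue (r := s + 2) i j f) = Fin.cons i (Fin.cons j f : Fin (s + 1) → Fin n) := by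
  funext t
  refine Fin.cases ?_ (fun t => ?_) t
  · simp [glue]
  · refine Fin.cases ?_ (fun t => ?_) t
    · simp [glue]
    · simp [glue]

lemma sum_cons {n s : ℕ} (F : (Fin (s + 1) → Fin n) → ℝ) :
    ∑ a, F a = ∑ i, ∑ f : Fin s → Fin n, F (Fin.cons i f) := by
  rw [← (Fin.consEquiv fun _ => Fin n).sum_comp, Fintype.sum_prod_type]
  rfl

lemma tenT_cons {n s : ℕ} (A : Fin n → Fin n → ℝ) (w : Fin n → ℝ) (i j : Fin n)
    (f : Fin s → Fin n) :
    tenT A w 0 1 (Fin.cons i (Fin.cons j f : Fin (s + 1) → Fin n) : Fin (s + 2) → Fin n) =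
      A i j * ∏ k, w (f k) := by
  unfold tenT psiF
  simp_rw [Fin.prod_univ_succ, fin_one_succ]
  simp only [Fin.succ_ne_zero, Fin.succ_inj, if_true, if_false, Fin.cons_zero, Fin.cons_succ]
  simp [ite_mul, mul_ite]

lemma inner_lhs {n s : ℕ} (A : Fin n → Fin n → ℝ) (w : Fin n → ℝ) (ω : GoteSpace (s + 2) n) :
    ∑ i, ∑ j, A i j * pureContraction ω w i j = ∑ m, coefC A w m * ω m := by
  have h : ∑ m, coefC A w m * ω m =
      ∑ a : Fin (s + 2) → Fin n, gote ω a * tenT A w 0 1 a := by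
    rw [← Finset.sum_fiberwise Finset.univ (tupleSym (n := n) (r := s + 2))]
    refine Finset.sum_congr rfl fun m _ => ?_
    unfold coefC
    rw [Finset.sum_mul]
    refine Finset.sum_congr rfl fun a ha => ?_
    have : tupleSym a = m := by simpa using ha
    unfold gote
    rw [this]
    ring
  rw [h, sum_cons]
  refine Finset.sum_congr rfl fun i _ => ?_
  rw [sum_cons]
  refine Finset.sum_congr rfl fun j _ => ?_
  unfold pureContraction
  rw [Finset.mul_sum]
  refine Finset.sum_congr rfl fun f _ => ?_
  have key : ∀ f : Fin s → Fin n, A i j * (gote ω (glue i j f) * ∏ k, w (f k)) =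
      gote ω (Fin.cons i (Fin.cons j f : Fin (s + 1) → Fin n) : Fin (s + 2) → Fin n) *
      tenT A w 0 1
        (Fin.cons i (Fin.cons j f : Fin (s + 1) → Fin n) : Fin (s + 2) → Fin n) := by
    intro f
    rw [glue_eq, tenT_cons]
    ring
  exact key f

lemma sum_upper {n : ℕ} (F : Fin n → Fin n → ℝ) :
    ∑ i, ∑ j, F i j = ∑ p : UpperIdx n,
      if p.1.1 = p.1.2 then F p.1.1 p.1.1 else F p.1.1 p.1.2 + F p.1.2 p.1.1 := by
  have h1 : ∑ p : UpperIdx n,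
      (if p.1.1 = p.1.2 then F p.1.1 p.1.1 else F p.1.1 p.1.2 + F p.1.2 p.1.1) =
      ∑ i, ∑ j, if i ≤ j then (if i = j then F i i else F i j + F j i) else 0 := by
    rw [← Fintype.sum_prod_type' (f := fun i j =>
      if i ≤ j then (if i = j then F i i else F i j + F j i) else 0), ← Finset.sum_filter]
    exact (Finset.sum_subtype _ (p := fun p : Fin n × Fin n => p.1 ≤ p.2) (by simp)
      (fun p : Fin n × Fin n =>
        if p.1 = p.2 then F p.1 p.1 else F p.1 p.2 + F p.2 p.1)).symm
  have h2 : ∀ i j : Fin n, (if i ≤ j then (if i = j then F i i else F i j + F j i) else 0) =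
      (if i ≤ j then F i j else 0) + if i < j then F j i else 0 := by
    intro i j
    rcases lt_trichotomy i j with h | h | h
    · simp [h, h.le, h.ne]
    · subst h; simp
    · simp [not_le.2 h, not_lt.2 h.le]
  rw [h1]
  simp_rw [h2, Finset.sum_add_distrib]
  rw [Finset.sum_comm (f := fun i j => if i < j then F j i else 0), ← Finset.sum_add_distrib]
  refine Finset.sum_congr rfl fun i _ => ?_
  rw [← Finset.sum_add_distrib]
  refine Finset.sum_congr rfl fun j _ => ?_
  rcases le_or_gt i j with h | h
  · simp [h, not_lt.2 h]
  · simp [h, not_le.2 h]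

/-- Coefficients on the GOE coordinates. -/
noncomputable def coefZ {n : ℕ} (A : Fin n → Fin n → ℝ) (p : UpperIdx n) : ℝ :=
  if p.1.1 = p.1.2 then A p.1.1 p.1.1 else A p.1.1 p.1.2 + A p.1.2 p.1.1

lemma inner_goe {n : ℕ} (A : Fin n → Fin n → ℝ) (z : UpperIdx n → ℝ) :
    ∑ i, ∑ j, A i j * goeMatrix z i j = ∑ p, coefZ A p * z p := by
  rw [sum_upper]
  refine Finset.sum_congr rfl fun p _ => ?_
  obtain ⟨⟨i, j⟩, h⟩ := p
  dsimp only at h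
  unfold coefZ goeMatrix
  by_cases hij : i = j
  · subst hij; simp
  · have : ¬ j ≤ i := fun h' => hij (le_antisymm h h')
    simp [hij, h, this]
    ring

lemma var_goe {n : ℕ} (A : Fin n → Fin n → ℝ) :
    ∑ p : UpperIdx n, coefZ A p ^ 2 * ((if p.1.1 = p.1.2 then 2 else 1 : NNReal) : ℝ) =
      (∑ x, ∑ y, A x y * A x y) + (∑ x, ∑ y, A x y * A y x) := by
  simp_rw [← Finset.sum_add_distrib]
  rw [sum_upper]
  refine Finset.sum_congr rfl fun p _ => ?_
  unfold coefZ
  split_ifs <;> simp <;> ring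

lemma dual_apply {n : ℕ} (L : StrongDual ℝ (Fin n → Fin n → ℝ)) (M : Fin n → Fin n → ℝ) :
    L M = ∑ i, ∑ j, L (Pi.single i (Pi.single j 1)) * M i j := by
  have : M = ∑ i, ∑ j, M i j • (Pi.single i (Pi.single j 1) : Fin n → Fin n → ℝ) := by
    funext a b
    simp [Finset.sum_apply, Pi.single_apply, ite_apply]
  conv_lhs => rw [this]
  simp only [map_sum, map_smul, smul_eq_mul]
  exact Finset.sum_congr rfl fun i _ => Finset.sum_congr rfl fun j _ => mul_comm _ _

lemma inner_rhs {n : ℕ} (A : Fin n → Fin n → ℝ) (w : Fin n → ℝ) (α β θ u : ℝ)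
    (v : Fin n → ℝ) (z : UpperIdx n → ℝ) :
    ∑ i, ∑ j, A i j * (α * u * w i * w j + β * (v i * w j + w i * v j) + θ * goeMatrix z i j) =
    (α * ∑ x, ∑ y, A x y * w x * w y) * u +
      (∑ i, β * (rowV A w i + colV A w i) * v i + ∑ p, θ * coefZ A p * z p) := by
  have h1 : ∑ p, θ * coefZ A p * z p = θ * ∑ i, ∑ j, A i j * goeMatrix z i j := by
    rw [inner_goe, Finset.mul_sum]
    exact Finset.sum_congr rfl fun p _ => by ring
  have h2 : ∑ i, β * (rowV A w i + colV A w i) * v i =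
      ∑ i, ∑ j, β * A i j * v i * w j + ∑ i, ∑ j, β * A i j * w i * v j := by
    rw [Finset.sum_comm (f := fun i j => β * A i j * w i * v j), ← Finset.sum_add_distrib]
    refine Finset.sum_congr rfl fun i _ => ?_
    unfold rowV colV
    rw [← Finset.sum_add_distrib, ← Finset.sum_add_distrib, Finset.mul_sum, Finset.sum_mul]
    exact Finset.sum_congr rfl fun j _ => by ring
  rw [h1, h2]
  simp only [Finset.mul_sum, Finset.sum_mul, ← Finset.sum_add_distrib]
  exact Finset.sum_congr rfl fun i _ => Finset.sum_congr rfl fun j _ => by ring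

lemma measurable_goe {n : ℕ} (i j : Fin n) :
    Measurable fun z : UpperIdx n → ℝ => goeMatrix z i j := by
  unfold goeMatrix
  split_ifs <;> fun_prop

lemma measurable_pc {r n : ℕ} (w : Fin n → ℝ) (i j : Fin n) :
    Measurable fun ω : GoteSpace r n => pureContraction ω w i j := by
  unfold pureContraction gote
  fun_prop

/-- **Rank-2 representation of a pure contraction.**
With `α = √((r−2)(r−3)/(r−1))`, `β = √((r−2)/(r−1))`, `θ = √(1/(r−1))`, the pure
contraction `M = G·w^{⊗(r−2)}` of a GOTE(r,n) tensor has the same law as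
`X = αU·wwᵀ + β(Vwᵀ + wVᵀ) + θZ`, where `U` is a standard Gaussian, `V` a standard
Gaussian vector and `Z` a GOE(n) matrix, mutually independent. -/
theorem pure_contraction_rank_two_representation
    (r n : ℕ) (hr : 3 ≤ r) (hn : 1 ≤ n)
    (w : Fin n → ℝ) (hw : ∑ i, w i ^ 2 = 1) :
    Measure.map (fun ω => fun i j => pureContraction ω w i j) (goteMeasure r n)
      = Measure.map
          (fun a : ℝ × (Fin n → ℝ) × (UpperIdx n → ℝ) => fun i j =>
            Real.sqrt (((r : ℝ) - 2) * ((r : ℝ) - 3) / ((r : ℝ) - 1)) * a.1 * w i * w j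
              + Real.sqrt (((r : ℝ) - 2) / ((r : ℝ) - 1)) * (a.2.1 i * w j + w i * a.2.1 j)
              + Real.sqrt (1 / ((r : ℝ) - 1)) * goeMatrix a.2.2 i j)
          ((gaussianReal 0 1).prod
            ((Measure.pi fun _ : Fin n => gaussianReal 0 1).prod (goeMeasure n))) := by
  obtain ⟨s, rfl⟩ : ∃ s, r = s + 2 := ⟨r - 2, by omega⟩
  have hs : 1 ≤ s := by omega
  have hs' : (1 : ℝ) ≤ s := by exact_mod_cast hs
  have hw' : ∑ i, w i * w i = 1 := by simpa [sq] using hw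
  have hα : 0 ≤ (((s + 2 : ℕ) : ℝ) - 2) * (((s + 2 : ℕ) : ℝ) - 3) / (((s + 2 : ℕ) : ℝ) - 1) := by
    push_cast
    exact div_nonneg (mul_nonneg (by linarith) (by linarith)) (by linarith)
  have hβ : 0 ≤ (((s + 2 : ℕ) : ℝ) - 2) / (((s + 2 : ℕ) : ℝ) - 1) := by
    push_cast
    exact div_nonneg (by linarith) (by linarith)
  have hθ : 0 ≤ 1 / (((s + 2 : ℕ) : ℝ) - 1) := by
    push_cast
    exact div_nonneg (by linarith) (by linarith)
  have hα2 := Real.sq_sqrt hα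
  have hβ2 := Real.sq_sqrt hβ
  have hθ2 := Real.sq_sqrt hθ
  set α := Real.sqrt ((((s + 2 : ℕ) : ℝ) - 2) * (((s + 2 : ℕ) : ℝ) - 3) /
    (((s + 2 : ℕ) : ℝ) - 1))
  set β := Real.sqrt ((((s + 2 : ℕ) : ℝ) - 2) / (((s + 2 : ℕ) : ℝ) - 1))
  set θ := Real.sqrt (1 / (((s + 2 : ℕ) : ℝ) - 1))
  have m1 : Measurable (fun (ω : GoteSpace (s + 2) n) => fun i j => pureContraction ω w i j) :=
    measurable_pi_lambda _ fun i => measurable_pi_lambda _ fun j => measurable_pc w i j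
  have m2 : Measurable (fun a : ℝ × (Fin n → ℝ) × (UpperIdx n → ℝ) => fun i j =>
      α * a.1 * w i * w j + β * (a.2.1 i * w j + w i * a.2.1 j) + θ * goeMatrix a.2.2 i j) := by
    refine measurable_pi_lambda _ fun i => measurable_pi_lambda _ fun j => ?_
    have : Measurable fun a : ℝ × (Fin n → ℝ) × (UpperIdx n → ℝ) => goeMatrix a.2.2 i j :=
      (measurable_goe i j).comp (measurable_snd.comp measurable_snd)
    refine Measurable.add (by fun_prop) (Measurable.const_mul this θ)
  have : IsProbabilityMeasure (goeMeasure n) := by unfold goeMeasure; infer_instance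
  have := Measure.isProbabilityMeasure_map (μ := goteMeasure (s + 2) n) m1.aemeasurable
  have := Measure.isProbabilityMeasure_map (μ := (gaussianReal 0 1).prod
            ((Measure.pi fun _ : Fin n => gaussianReal 0 1).prod (goeMeasure n))) m2.aemeasurable
  apply Measure.ext_of_charFunDual
  ext L
  set A : Fin n → Fin n → ℝ := fun i j => L (Pi.single i (Pi.single j 1)) with hA
  have hL : ∀ M, L M = ∑ i, ∑ j, A i j * M i j := fun M => dual_apply L M
  have mL : Continuous fun M : Fin n → Fin n → ℝ => Complex.exp ((L M : ℂ) * Complex.I) := by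
    fun_prop
  rw [charFunDual_apply, charFunDual_apply, integral_map m1.aemeasurable
    mL.aestronglyMeasurable, integral_map m2.aemeasurable mL.aestronglyMeasurable]
  simp_rw [hL, inner_rhs, inner_lhs]
  have lhs := integral_exp_pi (fun _ : Sym (Fin n) (s + 2) => 1) (coefC A w)
  rw [goteMeasure, lhs]
  set W := ∑ x, ∑ y, A x y * w x * w y with hW
  have hsplit : ∀ a : ℝ × (Fin n → ℝ) × (UpperIdx n → ℝ),
      Complex.exp ((((α * W) * a.1 + (∑ i, β * (rowV A w i + colV A w i) * a.2.1 i
        + ∑ p, θ * coefZ A p * a.2.2 p) : ℝ) : ℂ) * Complex.I) =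
      Complex.exp ((((α * W) * a.1 : ℝ) : ℂ) * Complex.I) *
        ((fun b : (Fin n → ℝ) × (UpperIdx n → ℝ) =>
        Complex.exp (((∑ i, β * (rowV A w i + colV A w i) * b.1 i : ℝ) : ℂ) * Complex.I) *
        Complex.exp (((∑ p, θ * coefZ A p * b.2 p : ℝ) : ℂ) * Complex.I)) a.2) := by
    intro a
    simp only [← Complex.exp_add]
    congr 1
    push_cast
    ring
  simp_rw [hsplit]
  rw [integral_prod_mul (f := fun x : ℝ => Complex.exp ((((α * W) * x : ℝ) : ℂ) * Complex.I)) (g := fun b : (Fin n → ℝ) × (UpperIdx n → ℝ) =>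
        Complex.exp (((∑ i, β * (rowV A w i + colV A w i) * b.1 i : ℝ) : ℂ) * Complex.I) *
        Complex.exp (((∑ p, θ * coefZ A p * b.2 p : ℝ) : ℂ) * Complex.I))]
  rw [integral_prod_mul
    (f := fun x : Fin n → ℝ =>
      Complex.exp (((∑ i, β * (rowV A w i + colV A w i) * x i : ℝ) : ℂ) * Complex.I))
    (g := fun z : UpperIdx n → ℝ =>
      Complex.exp (((∑ p, θ * coefZ A p * z p : ℝ) : ℂ) * Complex.I))]
  rw [integral_exp_one, goeMeasure, integral_exp_pi (fun _ : Fin n => 1)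
    (fun i => β * (rowV A w i + colV A w i)),
    integral_exp_pi _ (fun p => θ * coefZ A p), ← Complex.exp_add, ← Complex.exp_add]
  congr 1
  rw [← add_div, ← add_div, ← neg_add, ← neg_add, ← Complex.ofReal_add, ← Complex.ofReal_add]
  congr 3
  have e1 : ∑ i, (β * (rowV A w i + colV A w i)) ^ 2 * ((1 : NNReal) : ℝ) =
      β ^ 2 * ∑ i, (rowV A w i + colV A w i) ^ 2 := by
    rw [Finset.mul_sum]
    exact Finset.sum_congr rfl fun i _ => by rw [NNReal.coe_one]; ring
  have e2 : ∑ p : UpperIdx n, (θ * coefZ A p) ^ 2 *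
      ((if p.1.1 = p.1.2 then 2 else 1 : NNReal) : ℝ) =
      θ ^ 2 * ((∑ x, ∑ y, A x y * A x y) + (∑ x, ∑ y, A x y * A y x)) := by
    rw [← var_goe, Finset.mul_sum]
    exact Finset.sum_congr rfl fun i _ => by ring
  have e3 : ∑ m : Sym (Fin n) (s + 2), coefC A w m ^ 2 * ((1 : NNReal) : ℝ) =
      ∑ m : Sym (Fin n) (s + 2), coefC A w m ^ 2 := by simp
  rw [e1, e2, e3, var_lhs A w hw', mul_pow, hα2, hβ2, hθ2]
  have h0 : (s : ℝ) + 1 ≠ 0 := by positivity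
  have h0' : (((s + 2 : ℕ) : ℝ) - 1) = s + 1 := by push_cast; ring
  rw [h0', ← hW]
  push_cast
  field_simp
  ring
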